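/- arXiv:0812.3359 — 4 statements merged into one kernel-verified Lean document; each statement's English description precedes it below -/
import Mathlib

section
/- Let f and g be M-maps with f(∅) ≠ 0 and g(∅) ≠ 0. Then for every nonempty subset a ⊆ Ω, the cumulant of the convolution product is additive: log*(f * g)(a) = log* f(a) + log* g(a). -/
open Finset

/-- The convolution product of M-maps: `(f * g)(a) = ∑_{b ⊆ a} f(b) · g(a \ b)`. -/
noncomputable def MMap.conv {Ω : Type*} [DecidableEq Ω] (f g : Finset Ω → ℂ) : Finset Ω → ℂ :=
  fun a => ∑ b ∈ a.powerset, f b * g (a \ b)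

/-- The cumulant `log* f` on nonempty subsets:
`log* f(a) = ∑_p (|p|−1)!·(−1)^{|p|−1}·(∏_{c ∈ p} f(c))/f(∅)^{|p|}`,
summed over all set partitions `p` of `a`, `|p|` being the number of blocks. -/
noncomputable def MMap.logStar {Ω : Type*} [DecidableEq Ω] (f : Finset Ω → ℂ) :
    Finset Ω → ℂ := fun a =>
  ∑ p : Finpartition a,
    (Nat.factorial (p.parts.card - 1) : ℂ) * (-1 : ℂ) ^ (p.parts.card - 1) *
      (∏ c ∈ p.parts, f c) / (f ∅) ^ p.parts.card

/-!
For a point `x`, multiplication by the indicator of `{a | x ∈ a}` is a derivation `∂ₓ` of the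
convolution product, because a point `x ∈ a` lies in exactly one of `b` and `a \ b` for each
`b ⊆ a`. The logarithm satisfies `f * ∂ₓ (log* f) = ∂ₓ f`, so the Leibniz rule gives
`(f * g) * ∂ₓ (log* (f * g)) = ∂ₓ (f * g) = (f * g) * (∂ₓ (log* f) + ∂ₓ (log* g))`, and `f * g` can
be cancelled since it does not vanish at `∅`.
-/

namespace MMap

section Finpartition

variable {α : Type*} [GeneralizedBooleanAlgebra α] {a c : α}

lemma notMem_parts_sdiff (hc : c ≠ ⊥) (p : Finpartition (a \ c)) : c ∉ p.parts := fun hmem =>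
  hc (disjoint_self.1 (disjoint_sdiff_self_left.mono_left (p.le hmem)))

variable [DecidableEq α]

lemma sup_parts_erase (q : Finpartition a) (hc : c ∈ q.parts) :
    (q.parts.erase c).sup id = a \ c := by
  have hdisj : Disjoint c ((q.parts.erase c).sup id) :=
    q.supIndep (erase_subset c q.parts) hc (notMem_erase c q.parts)
  have hsup : c ⊔ (q.parts.erase c).sup id = a := by
    simpa only [insert_erase hc, q.sup_parts, id] using
      (sup_insert (s := q.parts.erase c) (b := c) (f := id)).symm
  simpa only [hsup] using hdisj.sup_sdiff_cancel_left.symm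

/-- Partitions of `a \ c` correspond to partitions of `a` having `c` as a block, by adjoining and
removing the block `c`. -/
def sdiffEquivMemParts (hca : c ≤ a) (hc : c ≠ ⊥) :
    Finpartition (a \ c) ≃ {q : Finpartition a // c ∈ q.parts} where
  toFun p :=
    ⟨p.extend hc disjoint_sdiff_self_left (sdiff_sup_cancel hca), mem_insert_self c p.parts⟩
  invFun q := q.1.ofSubset (erase_subset c q.1.parts) (sup_parts_erase q.1 q.2)
  left_inv p := Finpartition.ext (erase_insert (notMem_parts_sdiff hc p))
  right_inv q := Subtype.ext (Finpartition.ext (insert_erase q.2))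

end Finpartition

section Sums

variable {Ω M : Type*} [DecidableEq Ω] [AddCommMonoid M]

lemma sum_finpartition_sdiff {a c : Finset Ω} (hca : c ⊆ a) (hc : c ≠ ∅)
    (F : Finset (Finset Ω) → M) :
    ∑ p : Finpartition (a \ c), F p.parts =
      ∑ q : Finpartition a with c ∈ q.parts, F (q.parts.erase c) := by
  rw [sum_subtype (p := fun q : Finpartition a => c ∈ q.parts) _ (by simp),
    ← (sdiffEquivMemParts hca hc).sum_comp]
  refine sum_congr rfl fun p _ => congrArg F ?_
  exact (erase_insert (notMem_parts_sdiff hc p)).symm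

lemma sum_powerset_erase_sum_finpartition_sdiff {a : Finset Ω} {x : Ω} (hx : x ∈ a)
    (F : Finset (Finset Ω) → Finset Ω → M) :
    ∑ c ∈ (a.erase x).powerset.erase ∅, ∑ p : Finpartition (a \ c), F p.parts c =
      ∑ q : Finpartition a, ∑ c ∈ q.parts.erase (q.part x), F (q.parts.erase c) c := by
  calc ∑ c ∈ (a.erase x).powerset.erase ∅, ∑ p : Finpartition (a \ c), F p.parts c
      = ∑ c ∈ (a.erase x).powerset.erase ∅,
          ∑ q : Finpartition a with c ∈ q.parts, F (q.parts.erase c) c := by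
        refine sum_congr rfl fun c hc => ?_
        rw [mem_erase, mem_powerset] at hc
        exact sum_finpartition_sdiff (hc.2.trans (erase_subset x a)) hc.1 (F · c)
    _ = _ := by
        refine sum_comm' fun c q => ?_
        simp only [mem_erase, mem_powerset, subset_erase, mem_filter, mem_univ, true_and, and_true]
        constructor
        · rintro ⟨⟨-, -, hxc⟩, hcq⟩
          exact ⟨fun h => hxc (h ▸ q.mem_part_self.2 hx), hcq⟩
        · rintro ⟨hne, hcq⟩
          exact ⟨⟨q.ne_empty hcq, q.subset hcq, fun h => hne (q.part_eq_of_mem hcq h).symm⟩, hcq⟩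

lemma sum_finpartition_ite_card_eq_one {a : Finset Ω} (ha : a.Nonempty)
    (F : Finset (Finset Ω) → M) :
    ∑ q : Finpartition a, (if #q.parts = 1 then F q.parts else 0) = F {a} := by
  have card_eq_one_iff (q : Finpartition a) :
      #q.parts = 1 ↔ q = Finpartition.indiscrete ha.ne_empty := by
    refine ⟨fun hq => ?_, fun hq => by rw [hq, Finpartition.indiscrete_parts, card_singleton]⟩
    obtain ⟨b, hb⟩ := card_eq_one.1 hq
    have hba : b = a := by simpa [hb] using q.sup_parts
    exact Finpartition.ext (by rw [hb, hba, Finpartition.indiscrete_parts])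
  simp [card_eq_one_iff]

lemma sum_powerset_comm (a : Finset Ω) (F : Finset Ω → Finset Ω → M) :
    ∑ b ∈ a.powerset, F b (a \ b) = ∑ b ∈ a.powerset, F (a \ b) b := by
  refine sum_nbij' (a \ ·) (a \ ·) ?_ ?_ ?_ ?_ ?_ <;> intro b hb <;> rw [mem_powerset] at hb
  · exact mem_powerset.2 sdiff_subset
  · exact mem_powerset.2 sdiff_subset
  · exact Finset.sdiff_sdiff_eq_self hb
  · exact Finset.sdiff_sdiff_eq_self hb
  · rw [Finset.sdiff_sdiff_eq_self hb]

lemma sum_powerset_assoc (a : Finset Ω) (F : Finset Ω → Finset Ω → Finset Ω → M) :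
    ∑ e ∈ a.powerset, ∑ b ∈ e.powerset, F b (e \ b) (a \ e) =
      ∑ b ∈ a.powerset, ∑ c ∈ (a \ b).powerset, F b c ((a \ b) \ c) := by
  rw [sum_sigma', sum_sigma']
  refine sum_bij' (fun p _ => ⟨p.2, p.1 \ p.2⟩) (fun p _ => ⟨p.1 ∪ p.2, p.1⟩) ?_ ?_ ?_ ?_ ?_ <;>
    rintro ⟨s, t⟩ h <;> simp only [mem_sigma, mem_powerset] at h ⊢
  · exact ⟨h.2.trans h.1, sdiff_subset_sdiff h.1 le_rfl⟩
  · exact ⟨union_subset h.1 (h.2.trans sdiff_subset), subset_union_left⟩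
  · rw [union_sdiff_of_subset h.2]
  · rw [union_sdiff_cancel_left (disjoint_sdiff.mono_right h.2)]
  · rw [sdiff_sdiff_left, sup_eq_union, union_sdiff_of_subset h.2]

end Sums

section LogCoeff

variable {K : Type*} [Field K] {z : K}

/-- For `n ≥ 1`, the `n`-th derivative of the logarithm at `z`, the coefficient of a partition
with `n` blocks in the cumulant. The value at `n = 0` is `1`, by truncated subtraction. -/
def logCoeff (z : K) (n : ℕ) : K :=
  (Nat.factorial (n - 1) : K) * (-1) ^ (n - 1) / z ^ n

-- The `n`-th derivative of `z * log' z = 1`.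
lemma logCoeff_succ_mul_add (hz : z ≠ 0) (n : ℕ) :
    logCoeff z (n + 1) * z + n * logCoeff z n = if n = 0 then 1 else 0 := by
  rcases n with _ | n
  · simp [logCoeff, hz]
  · simp only [logCoeff, Nat.add_sub_cancel, Nat.factorial_succ, n.succ_ne_zero, if_false]
    push_cast
    field_simp
    ring

lemma logCoeff_mul_prod_add_sum_erase {ι : Type*} [DecidableEq ι] (hz : z ≠ 0) (u : ι → K)
    {s : Finset ι} {i : ι} (hi : i ∈ s) :
    z * (logCoeff z #s * ∏ j ∈ s, u j) +
        ∑ j ∈ s.erase i, u j * (logCoeff z #(s.erase j) * ∏ k ∈ s.erase j, u k) =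
      if #s = 1 then ∏ j ∈ s, u j else 0 := by
  obtain ⟨n, hn⟩ := Nat.exists_eq_succ_of_ne_zero (card_ne_zero_of_mem hi)
  have card_erase {j : ι} (hj : j ∈ s) : #(s.erase j) = n := by
    rw [card_erase_of_mem hj, hn, Nat.succ_sub_one]
  have summand_eq : ∀ j ∈ s.erase i, u j * (logCoeff z #(s.erase j) * ∏ k ∈ s.erase j, u k) =
      logCoeff z n * ∏ k ∈ s, u k := fun j hj => by
    have hjs := mem_of_mem_erase hj
    rw [card_erase hjs, ← mul_prod_erase s u hjs, mul_left_comm]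
  rw [sum_congr rfl summand_eq, sum_const, card_erase hi, hn, nsmul_eq_mul]
  calc _ = (logCoeff z (n + 1) * z + n * logCoeff z n) * ∏ j ∈ s, u j := by ring
    _ = _ := by simp [logCoeff_succ_mul_add hz]

end LogCoeff

variable {Ω : Type*} [DecidableEq Ω] (f g h : Finset Ω → ℂ)

lemma conv_comm : conv f g = conv g f := by
  funext a
  simp only [conv, sum_powerset_comm a fun b c => f b * g c, mul_comm]

lemma conv_assoc : conv (conv f g) h = conv f (conv g h) := by
  funext a
  simp only [conv, sum_mul, mul_sum, ← mul_assoc]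
  exact sum_powerset_assoc a fun b c d => f b * g c * h d

lemma conv_right_comm : conv (conv f g) h = conv (conv f h) g := by
  rw [conv_assoc, conv_comm g, ← conv_assoc]

lemma conv_add : conv f (g + h) = conv f g + conv f h := by
  funext a
  simp only [conv, Pi.add_apply, mul_add, sum_add_distrib]

lemma conv_apply_empty : conv f g ∅ = f ∅ * g ∅ := by
  simp [conv]

variable {f} in
lemma conv_right_injective (hf : f ∅ ≠ 0) : Function.Injective (conv f) := by
  intro g h hgh
  funext a
  induction a using Finset.strongInduction with
  | H a ih =>
    have tail_eq : ∑ b ∈ a.powerset.erase ∅, f b * g (a \ b) =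
        ∑ b ∈ a.powerset.erase ∅, f b * h (a \ b) := by
      refine sum_congr rfl fun b hb => ?_
      rw [mem_erase, mem_powerset] at hb
      rw [ih (a \ b) (sdiff_ssubset hb.2 (nonempty_iff_ne_empty.2 hb.1))]
    have apply_eq := congrFun hgh a
    rw [conv, conv, ← add_sum_erase _ _ (empty_mem_powerset a),
      ← add_sum_erase _ (fun b => f b * h (a \ b)) (empty_mem_powerset a), tail_eq,
      add_left_inj, sdiff_empty] at apply_eq
    exact mul_left_cancel₀ hf apply_eq

/-- The derivation `∂ₓ` of the convolution product attached to a point `x`: multiplication by the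
indicator of `{a | x ∈ a}`. Keeping the value at `a`, rather than moving it to `a \ {x}`, makes the
Leibniz rule hold on all sets. -/
def pointDeriv {M : Type*} [Zero M] (x : Ω) (f : Finset Ω → M) : Finset Ω → M :=
  fun a => if x ∈ a then f a else 0

lemma pointDeriv_apply_of_mem {M : Type*} [Zero M] (f : Finset Ω → M) {a : Finset Ω} {x : Ω}
    (hx : x ∈ a) : pointDeriv x f a = f a :=
  if_pos hx

lemma pointDeriv_apply_of_notMem {M : Type*} [Zero M] (f : Finset Ω → M) {a : Finset Ω} {x : Ω}
    (hx : x ∉ a) : pointDeriv x f a = 0 :=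
  if_neg hx

lemma conv_pointDeriv_apply_of_mem {a : Finset Ω} {x : Ω} (hx : x ∈ a) :
    conv f (pointDeriv x g) a = ∑ c ∈ (a.erase x).powerset, f c * g (a \ c) := by
  have powerset_erase : (a.erase x).powerset = {c ∈ a.powerset | x ∉ c} := by
    ext c
    simp only [mem_powerset, mem_filter, subset_erase]
  simp only [conv, pointDeriv, mem_sdiff, hx, true_and, mul_ite, mul_zero, powerset_erase,
    sum_filter]

lemma conv_pointDeriv_apply_of_notMem {a : Finset Ω} {x : Ω} (hx : x ∉ a) :
    conv f (pointDeriv x g) a = 0 :=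
  sum_eq_zero fun b _ => by
    rw [pointDeriv_apply_of_notMem g fun hxb => hx (sdiff_subset hxb), mul_zero]

lemma pointDeriv_conv (x : Ω) :
    pointDeriv x (conv f g) = conv (pointDeriv x f) g + conv f (pointDeriv x g) := by
  funext a
  by_cases hx : x ∈ a
  · rw [Pi.add_apply, pointDeriv_apply_of_mem _ hx, conv, conv, conv, ← sum_add_distrib]
    refine sum_congr rfl fun b _ => ?_
    by_cases hxb : x ∈ b <;> simp [pointDeriv, hx, hxb]
  · rw [Pi.add_apply, conv_comm (pointDeriv x f), conv_pointDeriv_apply_of_notMem _ _ hx,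
      conv_pointDeriv_apply_of_notMem _ _ hx, pointDeriv_apply_of_notMem _ hx, add_zero]

lemma logStar_eq_sum_logCoeff (a : Finset Ω) :
    logStar f a = ∑ p : Finpartition a, logCoeff (f ∅) #p.parts * ∏ c ∈ p.parts, f c := by
  simp only [logStar, logCoeff, mul_div_right_comm]

variable {f g}

lemma sum_mul_logStar_sdiff (hf : f ∅ ≠ 0) {a : Finset Ω} {x : Ω} (hx : x ∈ a) :
    ∑ c ∈ (a.erase x).powerset, f c * logStar f (a \ c) = f a := by
  let weight (P : Finset (Finset Ω)) : ℂ := logCoeff (f ∅) #P * ∏ b ∈ P, f b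
  calc ∑ c ∈ (a.erase x).powerset, f c * logStar f (a \ c)
      = f ∅ * logStar f a +
          ∑ c ∈ (a.erase x).powerset.erase ∅, ∑ p : Finpartition (a \ c), f c * weight p.parts := by
        rw [← add_sum_erase _ _ (empty_mem_powerset _), sdiff_empty]
        simp only [logStar_eq_sum_logCoeff f (a \ _), mul_sum, weight]
    _ = ∑ q : Finpartition a, (f ∅ * weight q.parts +
          ∑ c ∈ q.parts.erase (q.part x), f c * weight (q.parts.erase c)) := by
        rw [sum_powerset_erase_sum_finpartition_sdiff hx fun P c => f c * weight P,
          logStar_eq_sum_logCoeff, mul_sum, ← sum_add_distrib]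
    _ = ∑ q : Finpartition a, if #q.parts = 1 then ∏ b ∈ q.parts, f b else 0 :=
        sum_congr rfl fun q _ => logCoeff_mul_prod_add_sum_erase hf f (q.part_mem.2 hx)
    _ = f a := by
        rw [sum_finpartition_ite_card_eq_one ⟨x, hx⟩ fun P => ∏ b ∈ P, f b, prod_singleton]

lemma conv_pointDeriv_logStar (hf : f ∅ ≠ 0) (x : Ω) :
    conv f (pointDeriv x (logStar f)) = pointDeriv x f := by
  funext a
  by_cases hx : x ∈ a
  · rw [conv_pointDeriv_apply_of_mem _ _ hx, pointDeriv_apply_of_mem f hx,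
      sum_mul_logStar_sdiff hf hx]
  · rw [conv_pointDeriv_apply_of_notMem _ _ hx, pointDeriv_apply_of_notMem f hx]

lemma pointDeriv_logStar_conv (hf : f ∅ ≠ 0) (hg : g ∅ ≠ 0) (x : Ω) :
    pointDeriv x (logStar (conv f g)) = pointDeriv x (logStar f) + pointDeriv x (logStar g) := by
  have hfg : conv f g ∅ ≠ 0 := by
    rw [conv_apply_empty]
    exact mul_ne_zero hf hg
  apply conv_right_injective hfg
  calc conv (conv f g) (pointDeriv x (logStar (conv f g)))
      = pointDeriv x (conv f g) := conv_pointDeriv_logStar hfg x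
    _ = conv (pointDeriv x f) g + conv f (pointDeriv x g) := pointDeriv_conv f g x
    _ = conv (conv f (pointDeriv x (logStar f))) g +
          conv f (conv g (pointDeriv x (logStar g))) := by
        rw [conv_pointDeriv_logStar hf, conv_pointDeriv_logStar hg]
    _ = conv (conv f g) (pointDeriv x (logStar f) + pointDeriv x (logStar g)) := by
        rw [conv_right_comm, ← conv_assoc, conv_add]

end MMap

theorem logStar_conv_general {Ω : Type*} [DecidableEq Ω]
    (f g : Finset Ω → ℂ) (hf : f ∅ ≠ 0) (hg : g ∅ ≠ 0)
    (a : Finset Ω) (ha : a.Nonempty) :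
    MMap.logStar (MMap.conv f g) a = MMap.logStar f a + MMap.logStar g a := by
  obtain ⟨x, hx⟩ := ha
  simpa only [Pi.add_apply, MMap.pointDeriv_apply_of_mem _ hx] using
    congrFun (MMap.pointDeriv_logStar_conv hf hg x) a

/-- For M-maps `f`, `g` with `f(∅) ≠ 0` and `g(∅) ≠ 0`, the cumulant of the
convolution product is additive on every nonempty subset `a ⊆ Ω`:
`log*(f * g)(a) = log* f(a) + log* g(a)`. -/
theorem logStar_conv {Ω : Type*} [DecidableEq Ω] [Fintype Ω]
    (f g : Finset Ω → ℂ) (hf : f ∅ ≠ 0) (hg : g ∅ ≠ 0)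
    (a : Finset Ω) (ha : a.Nonempty) :
    MMap.logStar (MMap.conv f g) a = MMap.logStar f a + MMap.logStar g a :=
  logStar_conv_general f g hf hg a ha
end

section
/- Let h : ℝⁿ → ℝ be infinitely differentiable. For a subset a ⊆ {1,…,n} let ∂_a h(0) denote the mixed partial derivative of h with respect to the coordinates indexed by a, evaluated at 0 (with ∂_∅ h(0) = h(0)). Then for every nonempty a ⊆ {1,…,n}, ∂_a (exp ∘ h)(0) = e^{h(0)} · Σ_{p} ∏_{c ∈ p} ∂_c h(0), the sum running over all set partitions p of a. -/
open Finset

/-- The mixed partial derivative `∂_a h(x)` of `h : ℝⁿ → E` with respect to the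
(distinct) coordinates indexed by the finite set `a = {a_1 < ⋯ < a_k}`, defined by
feeding the corresponding standard basis vectors to the `k`-th iterated Fréchet
derivative.  For smooth `h` this is the usual mixed partial derivative
`∂^k h/∂x_{a_1}⋯∂x_{a_k}(x)` (independent of the order of differentiation), and
`∂_∅ h(x) = h(x)`. -/
noncomputable def mixedPartial {n : ℕ} {E : Type*} [NormedAddCommGroup E]
    [NormedSpace ℝ E] (h : (Fin n → ℝ) → E) (a : Finset (Fin n)) (x : Fin n → ℝ) : E :=
  iteratedFDeriv ℝ a.card h x (fun i => Pi.single (a.orderEmbOfFin rfl i) 1)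


/-!
Mathlib's Faà di Bruno formula expresses the `k`-th iterated derivative of `f ∘ h` as a sum over
`OrderedFinpartition k`, the partitions of `{0, …, k - 1}` whose blocks are enumerated increasingly
and listed by increasing maximum. Every set partition of a `k`-element linearly ordered set `a` can
be listed in exactly one such way, so the sum runs over the set partitions of `a`. Feeding standard
basis vectors to the derivatives, each block contributes the mixed partial derivative of `h` along
it. For `f = exp` the outer derivative is the same for all partitions and factors out.
-/

section OrderedFinpartition

open scoped Function

theorem orderedFinpartition_ext_range {k : ℕ} {c d : OrderedFinpartition k}
    (hlength : c.length = d.length)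
    (hrange : ∀ i, Set.range (c.emb i) = Set.range (d.emb (Fin.cast hlength i))) : c = d := by
  obtain ⟨length, cSize, _, cEmb, cEmb_strictMono, _, _, _⟩ := c
  obtain ⟨_, dSize, _, dEmb, dEmb_strictMono, _, _, _⟩ := d
  dsimp only at hlength
  subst hlength
  simp only [Fin.cast_eq_self] at hrange
  have hsize : cSize = dSize := by
    funext i
    simpa [Set.ncard_range_of_injective, (cEmb_strictMono i).injective,
      (dEmb_strictMono i).injective] using congrArg Set.ncard (hrange i)
  subst hsize
  have hemb : cEmb = dEmb :=
    funext fun i => ((cEmb_strictMono i).range_inj (dEmb_strictMono i)).1 (hrange i)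
  subst hemb
  rfl

variable {α : Type*} [LinearOrder α] {a : Finset α}

section Blocks

variable (c : OrderedFinpartition #a)

/-- The increasing enumeration of the `i`-th block of an ordered partition `c`, once
`{0, …, #a - 1}` is identified with `a` in increasing order. -/
def orderedBlockEmb (i : Fin c.length) : Fin (c.partSize i) ↪o α :=
  (OrderEmbedding.ofStrictMono (c.emb i) (c.emb_strictMono i)).trans (a.orderEmbOfFin rfl)

/-- The `i`-th block of an ordered partition `c`, as a subset of `a`. -/
def orderedBlock (i : Fin c.length) : Finset α :=
  univ.map (orderedBlockEmb c i).toEmbedding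

/-- The greatest element of the `i`-th block of an ordered partition `c`, encoded as the last value
of its increasing enumeration. -/
def orderedBlockMax (i : Fin c.length) : α :=
  orderedBlockEmb c i ⟨c.partSize i - 1, Nat.sub_one_lt_of_lt (c.partSize_pos i)⟩

theorem coe_orderedBlock (i : Fin c.length) :
    (orderedBlock c i : Set α) = a.orderEmbOfFin rfl '' Set.range (c.emb i) := by
  rw [orderedBlock, coe_map, coe_univ, Set.image_univ, ← Set.range_comp]
  rfl

theorem isGreatest_orderedBlockMax (i : Fin c.length) :
    IsGreatest (orderedBlock c i : Set α) (orderedBlockMax c i) := by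
  refine ⟨mem_map_of_mem _ (mem_univ _), fun x hx => ?_⟩
  obtain ⟨j, -, rfl⟩ := mem_map.1 hx
  exact (orderedBlockEmb c i).monotone (Nat.le_sub_one_of_lt j.isLt)

theorem orderedBlockMax_strictMono : StrictMono (orderedBlockMax c) :=
  (a.orderEmbOfFin rfl).strictMono.comp c.parts_strictMono

theorem orderedBlock_nonempty (i : Fin c.length) : (orderedBlock c i).Nonempty :=
  ⟨_, (isGreatest_orderedBlockMax c i).1⟩

theorem pairwise_disjoint_orderedBlock : Pairwise (Disjoint on orderedBlock c) := by
  intro i j hij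
  rw [Function.onFun, ← disjoint_coe, coe_orderedBlock, coe_orderedBlock,
    Set.disjoint_image_iff (a.orderEmbOfFin rfl).injective]
  exact c.disjoint (Set.mem_univ i) (Set.mem_univ j) hij

theorem orderedBlock_injective : Function.Injective (orderedBlock c) := fun i j hij =>
  (orderedBlockMax_strictMono c).injective <|
    (isGreatest_orderedBlockMax c i).unique (hij ▸ isGreatest_orderedBlockMax c j)

theorem biUnion_orderedBlock : univ.biUnion (orderedBlock c) = a := by
  apply coe_injective
  simp only [coe_biUnion, coe_univ, Set.mem_univ, Set.iUnion_true, coe_orderedBlock,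
    ← Set.image_iUnion]
  rw [Set.iUnion_eq_univ_iff.2 c.cover, Set.image_univ, range_orderEmbOfFin]

/-- The set partition of `a` underlying an ordered partition of `{0, …, #a - 1}`, obtained by
forgetting the order of the blocks. -/
def finpartitionOfOrdered : Finpartition a where
  parts := univ.map ⟨orderedBlock c, orderedBlock_injective c⟩
  supIndep := by
    rw [supIndep_map, Function.Embedding.coeFn_mk, Function.id_comp, supIndep_iff_pairwiseDisjoint]
    exact (pairwise_disjoint_orderedBlock c).set_pairwise _
  sup_parts := by
    rw [sup_map, Function.Embedding.coeFn_mk, Function.id_comp, sup_eq_biUnion,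
      biUnion_orderedBlock]
  bot_notMem := by
    simpa using fun i => (orderedBlock_nonempty c i).ne_empty

theorem coe_parts_finpartitionOfOrdered :
    ((finpartitionOfOrdered c).parts : Set (Finset α)) = Set.range (orderedBlock c) := by
  simp [finpartitionOfOrdered]

theorem orderedBlock_mem_parts (i : Fin c.length) :
    orderedBlock c i ∈ (finpartitionOfOrdered c).parts :=
  mem_map_of_mem _ (mem_univ i)

theorem card_parts_finpartitionOfOrdered : #(finpartitionOfOrdered c).parts = c.length := by
  simp [finpartitionOfOrdered]

theorem prod_parts_finpartitionOfOrdered {M : Type*} [CommMonoid M] (F : Finset α → M) :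
    ∏ t ∈ (finpartitionOfOrdered c).parts, F t = ∏ i, F (orderedBlock c i) := by
  simp [finpartitionOfOrdered]

theorem range_orderedBlockMax :
    Set.range (orderedBlockMax c) =
      {x | ∃ t ∈ (finpartitionOfOrdered c).parts, IsGreatest (t : Set α) x} := by
  ext x
  have hmax (i : Fin c.length) :
      IsGreatest (orderedBlock c i : Set α) x ↔ orderedBlockMax c i = x :=
    ⟨(isGreatest_orderedBlockMax c i).unique, fun h => h ▸ isGreatest_orderedBlockMax c i⟩
  simp [finpartitionOfOrdered, hmax]

end Blocks

-- The increasing sequence of block maxima is determined by the underlying set partition, and a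
-- block is determined by its maximum.
theorem finpartitionOfOrdered_injective :
    Function.Injective (finpartitionOfOrdered : OrderedFinpartition #a → Finpartition a) := by
  intro c d hcd
  have hlength : c.length = d.length := by
    rw [← card_parts_finpartitionOfOrdered, hcd, card_parts_finpartitionOfOrdered]
  have hmax : orderedBlockMax c = orderedBlockMax d ∘ Fin.cast hlength := by
    refine ((orderedBlockMax_strictMono c).range_inj
      ((orderedBlockMax_strictMono d).comp (Fin.cast_strictMono hlength))).1 ?_
    rw [(Fin.rightInverse_cast hlength).surjective.range_comp, range_orderedBlockMax,
      range_orderedBlockMax, hcd]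
  have hblock (i : Fin c.length) : orderedBlock c i = orderedBlock d (Fin.cast hlength i) :=
    (finpartitionOfOrdered d).eq_of_mem_parts (hcd ▸ orderedBlock_mem_parts c i)
      (orderedBlock_mem_parts d _) (isGreatest_orderedBlockMax c i).1
      (congrFun hmax i ▸ (isGreatest_orderedBlockMax d _).1)
  refine orderedFinpartition_ext_range hlength fun i =>
    (a.orderEmbOfFin rfl).injective.image_injective ?_
  rw [← coe_orderedBlock, ← coe_orderedBlock, hblock]

section SortedBlocks

variable (p : Finpartition a)

/-- The elements of `a` that are greatest in their block of the partition `p`. They index the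
blocks. -/
def blockMaxima : Finset α :=
  {x ∈ a | ∀ y ∈ p.part x, y ≤ x}

theorem bijOn_part_blockMaxima : Set.BijOn p.part (blockMaxima p) p.parts := by
  refine ⟨fun x hx => p.part_mem.2 (mem_filter.1 hx).1, fun x hx y hy hxy => ?_, fun t ht => ?_⟩
  · obtain ⟨hxa, hxmax⟩ := mem_filter.1 hx
    obtain ⟨hya, hymax⟩ := mem_filter.1 hy
    exact le_antisymm (hymax x (hxy ▸ p.mem_part hxa)) (hxmax y (hxy ▸ p.mem_part hya))
  · have htne := p.nonempty_of_mem_parts ht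
    have hpart : p.part (t.max' htne) = t := p.part_eq_of_mem ht (t.max'_mem htne)
    exact ⟨t.max' htne, mem_filter.2 ⟨p.le ht (t.max'_mem htne), hpart.symm ▸ t.le_max'⟩, hpart⟩

/-- The block of `p` whose maximum is the `i`-th smallest (counting from `0`) among the maxima of
all blocks. -/
def sortedBlock (i : Fin #(blockMaxima p)) : Finset α :=
  p.part ((blockMaxima p).orderEmbOfFin rfl i)

theorem isGreatest_sortedBlock (i : Fin #(blockMaxima p)) :
    IsGreatest (sortedBlock p i : Set α) ((blockMaxima p).orderEmbOfFin rfl i) := by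
  obtain ⟨hmem, hmax⟩ := mem_filter.1 ((blockMaxima p).orderEmbOfFin_mem rfl i)
  exact ⟨p.mem_part hmem, hmax⟩

theorem card_sortedBlock_pos (i : Fin #(blockMaxima p)) : 0 < #(sortedBlock p i) :=
  card_pos.2 ⟨_, (isGreatest_sortedBlock p i).1⟩

theorem sortedBlock_mem_parts (i : Fin #(blockMaxima p)) : sortedBlock p i ∈ p.parts :=
  (bijOn_part_blockMaxima p).mapsTo (orderEmbOfFin_mem ..)

theorem sortedBlock_injective : Function.Injective (sortedBlock p) := fun _ _ hij =>
  ((blockMaxima p).orderEmbOfFin rfl).injective <|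
    (bijOn_part_blockMaxima p).injOn (orderEmbOfFin_mem ..) (orderEmbOfFin_mem ..) hij

theorem range_sortedBlock : Set.range (sortedBlock p) = p.parts := by
  rw [← (bijOn_part_blockMaxima p).image_eq, ← range_orderEmbOfFin _ rfl, ← Set.range_comp]
  rfl

/-- The increasing enumeration of `sortedBlock p i`, each element being recorded by its position
in `a`. -/
def sortedBlockEmb (i : Fin #(blockMaxima p)) : Fin #(sortedBlock p i) ↪o Fin #a :=
  ((sortedBlock p i).orderIsoOfFin rfl).toOrderEmbedding.trans <|
    (Subtype.orderEmbedding fun _ hx => p.part_subset _ hx).trans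
      (a.orderIsoOfFin rfl).symm.toOrderEmbedding

theorem orderEmbOfFin_sortedBlockEmb (i : Fin #(blockMaxima p)) (j : Fin #(sortedBlock p i)) :
    a.orderEmbOfFin rfl (sortedBlockEmb p i j) = (sortedBlock p i).orderEmbOfFin rfl j := by
  rw [← coe_orderIsoOfFin_apply]
  exact congrArg Subtype.val ((a.orderIsoOfFin rfl).apply_symm_apply _)

theorem orderEmbOfFin_sortedBlockEmb_last (i : Fin #(blockMaxima p)) :
    a.orderEmbOfFin rfl (sortedBlockEmb p i
        ⟨#(sortedBlock p i) - 1, Nat.sub_one_lt_of_lt (card_sortedBlock_pos p i)⟩) =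
      (blockMaxima p).orderEmbOfFin rfl i := by
  rw [orderEmbOfFin_sortedBlockEmb, orderEmbOfFin_last rfl (card_sortedBlock_pos p i)]
  exact (isGreatest_max' _ _).unique (isGreatest_sortedBlock p i)

theorem image_range_sortedBlockEmb (i : Fin #(blockMaxima p)) :
    a.orderEmbOfFin rfl '' Set.range (sortedBlockEmb p i) = sortedBlock p i := by
  rw [← Set.range_comp, ← range_orderEmbOfFin (sortedBlock p i) rfl]
  exact congrArg Set.range (funext (orderEmbOfFin_sortedBlockEmb p i))

/-- The ordered partition of `{0, …, #a - 1}` obtained by listing the blocks of a set partition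
`p` of `a` by increasing maximum; it is the inverse of `finpartitionOfOrdered`. -/
def orderedOfFinpartition : OrderedFinpartition #a where
  length := #(blockMaxima p)
  partSize i := #(sortedBlock p i)
  partSize_pos := card_sortedBlock_pos p
  emb i := sortedBlockEmb p i
  emb_strictMono i := (sortedBlockEmb p i).strictMono
  parts_strictMono i j hij := by
    rw [← (a.orderEmbOfFin rfl).lt_iff_lt, orderEmbOfFin_sortedBlockEmb_last,
      orderEmbOfFin_sortedBlockEmb_last]
    exact ((blockMaxima p).orderEmbOfFin rfl).strictMono hij
  disjoint i _ j _ hij := by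
    rw [Function.onFun, ← Set.disjoint_image_iff (a.orderEmbOfFin rfl).injective,
      image_range_sortedBlockEmb, image_range_sortedBlockEmb, disjoint_coe]
    exact p.disjoint (sortedBlock_mem_parts p i) (sortedBlock_mem_parts p j)
      ((sortedBlock_injective p).ne hij)
  cover x := by
    obtain ⟨t, ht, hxt⟩ := p.exists_mem (a.orderEmbOfFin_mem rfl x)
    obtain ⟨i, rfl⟩ : t ∈ Set.range (sortedBlock p) := range_sortedBlock p ▸ ht
    rw [← mem_coe, ← image_range_sortedBlockEmb] at hxt
    exact ⟨i, (a.orderEmbOfFin rfl).injective.mem_set_image.1 hxt⟩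

theorem orderedBlock_orderedOfFinpartition (i : Fin #(blockMaxima p)) :
    orderedBlock (orderedOfFinpartition p) i = sortedBlock p i :=
  coe_injective ((coe_orderedBlock _ _).trans (image_range_sortedBlockEmb p i))

theorem finpartitionOfOrdered_orderedOfFinpartition :
    finpartitionOfOrdered (orderedOfFinpartition p) = p := by
  refine Finpartition.ext (coe_injective ?_)
  rw [coe_parts_finpartitionOfOrdered, funext (orderedBlock_orderedOfFinpartition p)]
  exact range_sortedBlock p

end SortedBlocks

theorem finpartitionOfOrdered_bijective :
    Function.Bijective (finpartitionOfOrdered : OrderedFinpartition #a → Finpartition a) :=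
  ⟨finpartitionOfOrdered_injective,
    fun p => ⟨orderedOfFinpartition p, finpartitionOfOrdered_orderedOfFinpartition p⟩⟩

end OrderedFinpartition

section MixedPartial

variable {n : ℕ} {E : Type*} [NormedAddCommGroup E] [NormedSpace ℝ E] {f : ℝ → E}
  {h : (Fin n → ℝ) → ℝ} {a : Finset (Fin n)} {x : Fin n → ℝ}

theorem mixedPartial_map_univ (g : (Fin n → ℝ) → E) {k : ℕ} (e : Fin k ↪o Fin n)
    (x : Fin n → ℝ) :
    mixedPartial g (univ.map e.toEmbedding) x =
      iteratedFDeriv ℝ k g x fun i => Pi.single (e i) 1 := by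
  have hcard : #(univ.map e.toEmbedding) = k := by simp
  have henum : e = (univ.map e.toEmbedding).orderEmbOfFin hcard :=
    orderEmbOfFin_unique' hcard fun i => mem_map_of_mem _ (mem_univ i)
  conv_rhs => rw [henum]
  generalize univ.map e.toEmbedding = b at hcard
  subst hcard
  rfl

theorem mixedPartial_comp_eq_sum_orderedFinpartition (hf : ContDiffAt ℝ #a f (h x))
    (hh : ContDiffAt ℝ #a h x) :
    mixedPartial (f ∘ h) a x = ∑ c : OrderedFinpartition #a,
      (∏ i, mixedPartial h (orderedBlock c i) x) • iteratedDeriv c.length f (h x) := by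
  rw [mixedPartial, iteratedFDeriv_comp hf hh le_rfl, FormalMultilinearSeries.taylorComp,
    _root_.sum_apply]
  refine sum_congr rfl fun c _ => ?_
  rw [FormalMultilinearSeries.compAlongOrderedFinpartition_apply, ftaylorSeries,
    iteratedFDeriv_apply_eq_iteratedDeriv_mul_prod]
  simp_rw [orderedBlock, mixedPartial_map_univ]
  rfl

theorem mixedPartial_comp_eq_sum_finpartition (hf : ContDiffAt ℝ #a f (h x))
    (hh : ContDiffAt ℝ #a h x) :
    mixedPartial (f ∘ h) a x = ∑ p : Finpartition a,
      (∏ c ∈ p.parts, mixedPartial h c x) • iteratedDeriv #p.parts f (h x) := by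
  rw [mixedPartial_comp_eq_sum_orderedFinpartition hf hh,
    ← finpartitionOfOrdered_bijective.sum_comp fun p : Finpartition a =>
      (∏ c ∈ p.parts, mixedPartial h c x) • iteratedDeriv #p.parts f (h x)]
  simp_rw [prod_parts_finpartitionOfOrdered, card_parts_finpartitionOfOrdered]

theorem mixedPartial_exp_comp_general (hh : ContDiffAt ℝ #a h x) :
    mixedPartial (fun y => Real.exp (h y)) a x =
      Real.exp (h x) * ∑ p : Finpartition a, ∏ c ∈ p.parts, mixedPartial h c x := by
  calc mixedPartial (Real.exp ∘ h) a x
    _ = ∑ p : Finpartition a,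
          (∏ c ∈ p.parts, mixedPartial h c x) • iteratedDeriv #p.parts Real.exp (h x) :=
        mixedPartial_comp_eq_sum_finpartition Real.contDiff_exp.contDiffAt hh
    _ = Real.exp (h x) * ∑ p : Finpartition a, ∏ c ∈ p.parts, mixedPartial h c x := by
        simp only [iteratedDeriv_eq_iterate, Real.iter_deriv_exp, smul_eq_mul, mul_comm, mul_sum]

end MixedPartial

/-- Faà di Bruno for the exponential: if `h : ℝⁿ → ℝ` is smooth, then for every
nonempty `a ⊆ {1,…,n}`,
`∂_a(exp ∘ h)(0) = e^{h(0)} · ∑_p ∏_{c∈p} ∂_c h(0)`,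
summed over all set partitions `p` of `a`. -/
theorem mixedPartial_exp_comp (n : ℕ) (h : (Fin n → ℝ) → ℝ)
    (hh : ContDiff ℝ (⊤ : ℕ∞) h)
    (a : Finset (Fin n)) (ha : a.Nonempty) :
    mixedPartial (fun x => Real.exp (h x)) a 0 =
      Real.exp (h 0) * ∑ p : Finpartition a, ∏ c ∈ p.parts, mixedPartial h c 0 :=
  mixedPartial_exp_comp_general (hh.of_le (mod_cast le_top)).contDiffAt
end

section
/- Let h : ℝⁿ → ℝ be infinitely differentiable with h(0) ≠ 0. For a subset a ⊆ {1,…,n} let ∂_a h(0) denote the mixed partial derivative of h with respect to the coordinates indexed by a, evaluated at 0 (with ∂_∅ h(0) = h(0)). Then for every nonempty a ⊆ {1,…,n}, ∂_a (1/h)(0) = Σ_{p} |p|!·(−1)^{|p|}·(∏_{c ∈ p} ∂_c h(0)) / h(0)^{|p|+1}, the sum running over all set partitions p of a, with |p| the number of blocks of p. -/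
open Finset

/-!
Differentiating `h * (1 / h) = 1` by the Leibniz rule over subsets gives, for nonempty `a`,
`∑_{b ⊆ a} ∂_b h * ∂_{a \ b} (1 / h) = 0`, which determines `∂_a (1 / h)` recursively. The sum over
set partitions solves this recursion: a nonempty `b ⊆ a` together with a partition of `a \ b` is a
partition of `a` with a distinguished block, and the `|p|` choices of that block turn `(|p| - 1)!`
into `|p|!`.
-/

open Filter Topology
open scoped Nat

section SetPartitions

theorem sup_erase_parts_eq_sdiff {α : Type*} [GeneralizedBooleanAlgebra α] [DecidableEq α]
    {a b : α} (p : Finpartition a) (hb : b ∈ p.parts) : (p.parts.erase b).sup id = a \ b := by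
  have hdisj : Disjoint b ((p.parts.erase b).sup id) :=
    p.supIndep (erase_subset b p.parts) hb (notMem_erase b p.parts)
  have hsup : b ⊔ (p.parts.erase b).sup id = a := by
    simpa only [sup_insert, id, p.sup_parts] using congrArg (fun P => P.sup id) (insert_erase hb)
  calc (p.parts.erase b).sup id
      = (b ⊔ (p.parts.erase b).sup id) \ b := hdisj.sup_sdiff_cancel_left.symm
    _ = a \ b := by rw [hsup]

theorem notMem_parts_of_finpartition_sdiff {α : Type*} [GeneralizedBooleanAlgebra α] {a b : α}
    (hb : b ≠ ⊥) (q : Finpartition (a \ b)) : b ∉ q.parts := fun hbq =>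
  hb (disjoint_self.1 (disjoint_sdiff_self_right.mono_right (q.le hbq)))

variable {α : Type*} [DecidableEq α]

theorem sum_finpartition_empty {M : Type*} [AddCommMonoid M] (F : Finset (Finset α) → M) :
    ∑ p : Finpartition (∅ : Finset α), F p.parts = F ∅ := by
  have : Unique (Finpartition (∅ : Finset α)) :=
    inferInstanceAs (Unique (Finpartition (⊥ : Finset α)))
  rw [Fintype.sum_unique, (default : Finpartition (∅ : Finset α)).parts_eq_empty_iff.2 rfl]

theorem sum_powerset_sum_finpartition_sdiff {M : Type*} [AddCommMonoid M] (a : Finset α)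
    (F : Finset α → Finset (Finset α) → M) :
    ∑ b ∈ a.powerset.erase ∅, ∑ q : Finpartition (a \ b), F b q.parts =
      ∑ p : Finpartition a, ∑ b ∈ p.parts, F b (p.parts.erase b) := by
  have ne_empty_and_subset {b : Finset α} (hb : b ∈ a.powerset.erase ∅) : b ≠ ∅ ∧ b ⊆ a := by
    simpa using hb
  rw [sum_sigma', sum_sigma']
  refine sum_bij'
    (fun x hx =>
      have hb := ne_empty_and_subset (mem_sigma.1 hx).1
      ⟨x.2.extend hb.1 sdiff_disjoint (sdiff_union_of_subset hb.2), x.1⟩)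
    (fun y hy =>
      ⟨y.2, y.1.ofSubset (erase_subset y.2 y.1.parts)
        (sup_erase_parts_eq_sdiff y.1 (mem_sigma.1 hy).2)⟩) ?_ ?_ ?_ ?_ ?_
  · rintro ⟨b, q⟩ -
    simp
  · rintro ⟨p, b⟩ hpb
    have hb : b ∈ p.parts := (mem_sigma.1 hpb).2
    simpa using ⟨p.ne_empty hb, p.le hb⟩
  · rintro ⟨b, q⟩ hbq
    have hb := ne_empty_and_subset (mem_sigma.1 hbq).1
    exact Sigma.ext rfl (heq_of_eq (Finpartition.ext
      (erase_insert (notMem_parts_of_finpartition_sdiff hb.1 q))))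
  · rintro ⟨p, b⟩ hpb
    exact Sigma.ext (Finpartition.ext (insert_erase (mem_sigma.1 hpb).2)) HEq.rfl
  · rintro ⟨b, q⟩ hbq
    have hb := ne_empty_and_subset (mem_sigma.1 hbq).1
    simp [erase_insert (notMem_parts_of_finpartition_sdiff hb.1 q)]

end SetPartitions

section SubsetConvolution

variable {R : Type*} [CommRing R]

/-- The contribution of a family `P` of blocks to the Faà di Bruno formula for the reciprocal:
`u c` stands for the derivative along the block `c` and `t` for the value of the reciprocal. -/
def reciprocalTerm {ι : Type*} (u : ι → R) (t : R) (P : Finset ι) : R :=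
  (#P)! * (-1) ^ #P * (∏ c ∈ P, u c) * t ^ (#P + 1)

theorem sum_mul_reciprocalTerm_erase {ι : Type*} [DecidableEq ι] (u : ι → R) {s t : R}
    (hst : s * t = 1) {P : Finset ι} (hP : P.Nonempty) :
    ∑ b ∈ P, u b * reciprocalTerm u t (P.erase b) = -(s * reciprocalTerm u t P) := by
  obtain ⟨m, hm⟩ : ∃ m, #P = m + 1 := Nat.exists_eq_succ_of_ne_zero hP.card_ne_zero
  have hterm (b : ι) (hb : b ∈ P) : u b * reciprocalTerm u t (P.erase b) =
      m ! * (-1) ^ m * (∏ c ∈ P, u c) * t ^ (m + 1) := by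
    rw [reciprocalTerm, card_erase_of_mem hb, hm, Nat.add_sub_cancel, ← mul_prod_erase P u hb]
    ring
  rw [sum_congr rfl hterm, sum_const, reciprocalTerm, hm, Nat.factorial_succ, nsmul_eq_mul]
  push_cast
  linear_combination (-(m + 1) * m ! * (-1) ^ m * (∏ c ∈ P, u c) * t ^ (m + 1)) * hst

theorem eq_sum_reciprocalTerm_of_sum_powerset_eq_zero {α : Type*} [DecidableEq α]
    {u v : Finset α → R} (huv : u ∅ * v ∅ = 1) (a : Finset α)
    (hconv : ∀ b ⊆ a, b.Nonempty → ∑ c ∈ b.powerset, u c * v (b \ c) = 0) :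
    v a = ∑ p : Finpartition a, reciprocalTerm u (v ∅) p.parts := by
  induction a using Finset.strongInduction with
  | H a ih =>
    rcases a.eq_empty_or_nonempty with rfl | ha
    · rw [sum_finpartition_empty]
      simp [reciprocalTerm]
    have hrec (b : Finset α) (hb : b ∈ a.powerset.erase ∅) :
        v (a \ b) = ∑ q : Finpartition (a \ b), reciprocalTerm u (v ∅) q.parts := by
      obtain ⟨hb0, hba⟩ : b ≠ ∅ ∧ b ⊆ a := by simpa using hb
      exact ih (a \ b) (sdiff_ssubset hba (nonempty_iff_ne_empty.2 hb0))
        fun c hc => hconv c (hc.trans sdiff_subset)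
    have hsplit : u ∅ * v a + ∑ b ∈ a.powerset.erase ∅, u b * v (a \ b) = 0 := by
      simpa [add_sum_erase _ _ (empty_mem_powerset a)] using hconv a Subset.rfl ha
    refine (IsUnit.of_mul_eq_one _ huv).mul_left_cancel ?_
    calc u ∅ * v a
        = -∑ b ∈ a.powerset.erase ∅, u b * v (a \ b) := eq_neg_of_add_eq_zero_left hsplit
      _ = -∑ b ∈ a.powerset.erase ∅, ∑ q : Finpartition (a \ b),
            u b * reciprocalTerm u (v ∅) q.parts := by
          rw [sum_congr rfl fun b hb => by rw [hrec b hb, mul_sum]]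
      _ = -∑ p : Finpartition a, ∑ b ∈ p.parts,
            u b * reciprocalTerm u (v ∅) (p.parts.erase b) := by
          rw [sum_powerset_sum_finpartition_sdiff a fun b P => u b * reciprocalTerm u (v ∅) P]
      _ = u ∅ * ∑ p : Finpartition a, reciprocalTerm u (v ∅) p.parts := by
          rw [sum_congr rfl fun p _ =>
            sum_mul_reciprocalTerm_erase u huv (p.parts_nonempty ha.ne_empty),
            sum_neg_distrib, neg_neg, mul_sum]

end SubsetConvolution

section MixedPartial

theorem orderEmbOfFin_insert_of_forall_lt {α : Type*} [LinearOrder α] {i : α} {s : Finset α}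
    (hi : ∀ j ∈ s, i < j) (hcard : #(insert i s) = #s + 1) :
    ⇑((insert i s).orderEmbOfFin hcard) = Fin.cons i (s.orderEmbOfFin rfl) := by
  symm
  refine orderEmbOfFin_unique hcard (fun j => ?_) fun j k hjk => ?_
  · cases j using Fin.cases <;> simp
  · cases k using Fin.cases with
    | zero => exact absurd hjk (Fin.not_lt_zero j)
    | succ k =>
      cases j using Fin.cases with
      | zero => simpa using hi _ (s.orderEmbOfFin_mem rfl k)
      | succ j => simpa using hjk

variable {n : ℕ} {E : Type*} [NormedAddCommGroup E] [NormedSpace ℝ E]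
  {f : (Fin n → ℝ) → E} {s a : Finset (Fin n)} {x : Fin n → ℝ}

theorem mixedPartial_empty (f : (Fin n → ℝ) → E) (x : Fin n → ℝ) : mixedPartial f ∅ x = f x :=
  iteratedFDeriv_zero_apply _

theorem mixedPartial_eq_iteratedFDeriv {k : ℕ} (hk : #a = k) :
    mixedPartial f a x =
      iteratedFDeriv ℝ k f x fun i => Pi.single (a.orderEmbOfFin hk i) 1 := by
  subst hk
  rfl

theorem mixedPartial_const (c : E) (ha : a.Nonempty) :
    mixedPartial (fun _ => c) a x = 0 := by
  rw [mixedPartial, iteratedFDeriv_const_of_ne ha.card_ne_zero, Pi.zero_apply, zero_apply]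

theorem mixedPartial_congr_of_eventuallyEq {g : (Fin n → ℝ) → E} (hfg : f =ᶠ[𝓝 x] g) :
    mixedPartial f a x = mixedPartial g a x := by
  rw [mixedPartial, mixedPartial, (hfg.iteratedFDeriv ℝ #a).eq_of_nhds]

theorem differentiableAt_mixedPartial {m : ℕ} (hf : ContDiffAt ℝ m f x) (hs : #s < m) :
    DifferentiableAt ℝ (mixedPartial f s) x :=
  (hf.differentiableAt_iteratedFDeriv (mod_cast hs)).continuousMultilinear_apply_const _

theorem mixedPartial_insert_of_forall_lt {m : ℕ} (hf : ContDiffAt ℝ m f x) (hs : #s < m)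
    {i : Fin n} (hi : ∀ j ∈ s, i < j) :
    mixedPartial f (insert i s) x = fderiv ℝ (mixedPartial f s) x (Pi.single i 1) := by
  have hcard : #(insert i s) = #s + 1 := card_insert_of_notMem fun his => (hi i his).false
  have hdiff : DifferentiableAt ℝ (iteratedFDeriv ℝ #s f) x :=
    hf.differentiableAt_iteratedFDeriv (mod_cast hs)
  rw [mixedPartial_eq_iteratedFDeriv hcard, orderEmbOfFin_insert_of_forall_lt hi hcard,
    iteratedFDeriv_succ_apply_left]
  exact (fderiv_continuousMultilinear_apply_const_apply hdiff _ _).symm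

theorem mixedPartial_mul {A : Type*} [NormedRing A] [NormedAlgebra ℝ A]
    {f g : (Fin n → ℝ) → A} (hf : ContDiffAt ℝ #a f x) (hg : ContDiffAt ℝ #a g x) :
    mixedPartial (fun y => f y * g y) a x =
      ∑ b ∈ a.powerset, mixedPartial f b x * mixedPartial g (a \ b) x := by
  induction a using Finset.induction_on_min generalizing x with
  | empty => simp [mixedPartial_empty]
  | insert i s hi ih =>
    have his : i ∉ s := fun his => (hi i his).false
    have hlt {b : Finset (Fin n)} (hb : b ⊆ s) : #b < #(insert i s) :=
      card_lt_card (hb.trans_ssubset (ssubset_insert his))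
    have hleibniz : mixedPartial (fun y => f y * g y) s =ᶠ[𝓝 x]
        fun y => ∑ b ∈ s.powerset, mixedPartial f b y * mixedPartial g (s \ b) y := by
      filter_upwards [hf.eventually (by simp), hg.eventually (by simp)] with y hfy hgy
      exact ih (hfy.of_le (mod_cast (hlt Subset.rfl).le)) (hgy.of_le (mod_cast (hlt Subset.rfl).le))
    have hdf {b} (hb : b ∈ s.powerset) : DifferentiableAt ℝ (mixedPartial f b) x :=
      differentiableAt_mixedPartial hf (hlt (mem_powerset.1 hb))
    have hdg (b) : DifferentiableAt ℝ (mixedPartial g (s \ b)) x :=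
      differentiableAt_mixedPartial hg (hlt sdiff_subset)
    rw [mixedPartial_insert_of_forall_lt (hf.mul hg) (hlt Subset.rfl) hi, hleibniz.fderiv_eq,
      fderiv_fun_sum fun b hb => (hdf hb).fun_mul (hdg b), _root_.sum_apply,
      sum_powerset_insert his, ← sum_add_distrib]
    refine sum_congr rfl fun b hb => ?_
    have hbs : b ⊆ s := mem_powerset.1 hb
    rw [fderiv_fun_mul' (hdf hb) (hdg b), insert_sdiff_of_notMem s (notMem_mono hbs his),
      insert_sdiff_insert, sdiff_insert_of_notMem his,
      mixedPartial_insert_of_forall_lt hf (hlt hbs) fun j hj => hi j (hbs hj),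
      mixedPartial_insert_of_forall_lt hg (hlt sdiff_subset) fun j hj => hi j (sdiff_subset hj)]
    simp

theorem mixedPartial_eq_sum_reciprocalTerm {A : Type*} [NormedCommRing A] [NormedAlgebra ℝ A]
    {f g : (Fin n → ℝ) → A} (hf : ContDiffAt ℝ #a f x) (hg : ContDiffAt ℝ #a g x)
    (hfg : (fun y => f y * g y) =ᶠ[𝓝 x] fun _ => 1) :
    mixedPartial g a x =
      ∑ p : Finpartition a, reciprocalTerm (fun c => mixedPartial f c x) (g x) p.parts := by
  have hempty : mixedPartial f ∅ x * mixedPartial g ∅ x = 1 := by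
    simpa only [mixedPartial_empty] using hfg.eq_of_nhds
  have hconv (b : Finset (Fin n)) (hba : b ⊆ a) (hb : b.Nonempty) :
      ∑ c ∈ b.powerset, mixedPartial f c x * mixedPartial g (b \ c) x = 0 := by
    have hle : (#b : WithTop ℕ∞) ≤ #a := mod_cast card_le_card hba
    rw [← mixedPartial_mul (hf.of_le hle) (hg.of_le hle),
      mixedPartial_congr_of_eventuallyEq hfg, mixedPartial_const 1 hb]
  simpa only [mixedPartial_empty] using
    eq_sum_reciprocalTerm_of_sum_powerset_eq_zero (u := fun c => mixedPartial f c x)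
      (v := fun c => mixedPartial g c x) hempty a hconv

theorem mixedPartial_inv_comp_general {𝕜 : Type*} [NormedField 𝕜] [NormedAlgebra ℝ 𝕜]
    {h : (Fin n → ℝ) → 𝕜} (hh : ContDiffAt ℝ #a h x) (hx : h x ≠ 0) :
    mixedPartial (fun y => 1 / h y) a x =
      ∑ p : Finpartition a,
        (Nat.factorial p.parts.card : 𝕜) * (-1 : 𝕜) ^ p.parts.card *
          (∏ c ∈ p.parts, mixedPartial h c x) / (h x) ^ (p.parts.card + 1) := by
  have hinv : ContDiffAt ℝ #a (fun y => 1 / h y) x := by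
    simpa only [one_div] using hh.fun_inv hx
  have hmul : (fun y => h y * (1 / h y)) =ᶠ[𝓝 x] fun _ => 1 :=
    (hh.continuousAt.eventually_ne hx).mono fun y hy => mul_one_div_cancel hy
  rw [mixedPartial_eq_sum_reciprocalTerm hh hinv hmul]
  simp only [reciprocalTerm, one_div_pow, mul_one_div]

end MixedPartial

/-- Faà di Bruno for the reciprocal: if `h : ℝⁿ → ℝ` is smooth with `h(0) ≠ 0`,
then for every nonempty `a ⊆ {1,…,n}`,
`∂_a(1/h)(0) = ∑_p |p|!·(−1)^{|p|}·(∏_{c∈p} ∂_c h(0))/h(0)^{|p|+1}`,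
summed over all set partitions `p` of `a`. -/
theorem mixedPartial_inv_comp (n : ℕ) (h : (Fin n → ℝ) → ℝ)
    (hh : ContDiff ℝ (⊤ : ℕ∞) h) (h0 : h 0 ≠ 0)
    (a : Finset (Fin n)) (ha : a.Nonempty) :
    mixedPartial (fun x => 1 / h x) a 0 =
      ∑ p : Finpartition a,
        (Nat.factorial p.parts.card : ℝ) * (-1 : ℝ) ^ p.parts.card *
          (∏ c ∈ p.parts, mixedPartial h c 0) / (h 0) ^ (p.parts.card + 1) := by
  exact mixedPartial_inv_comp_general (hh.contDiffAt.of_le (mod_cast le_top)) h0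
end

section
/- Let (S, μ) be a probability space and let X_1, …, X_n : S → ℝ be bounded measurable random variables. Define the moment M-map f(a) = E[∏_{j∈a} X_j] for a ⊆ {1,…,n} (so f(∅) = 1), and define h : ℝⁿ → ℝ by h(γ) = E[exp(Σ_{j=1}^n γ_j X_j)]. Then h is infinitely differentiable, h(γ) > 0 for all γ, and for every nonempty a ⊆ {1,…,n} the mixed partial derivative of log ∘ h with respect to the coordinates indexed by a, evaluated at γ = 0, equals the cumulant log* f(a) = Σ_{p} (|p|−1)!·(−1)^{|p|−1} ∏_{c ∈ p} f(c), the sum running over all set partitions p of a. -/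
open Finset

open MeasureTheory

/-!
Differentiating `h γ = E[exp (∑ j, γ j * X j)]` in the direction `j` inserts a factor `X j` under
the expectation, so the mixed partial derivatives of `h` at `0` are the moments `f c`. The mixed
partial derivatives of `g ∘ h` are given by Faà di Bruno's formula
`∂_a (g ∘ h) = ∑ p, g^(|p|) (h) * ∏ c ∈ p, ∂_c h`. To pass from `a` to `insert j a`, differentiate a
summand in the direction `j`: the derivative falls either on the outer factor, which opens the new
block `{j}`, or on one of the factors `∂_c h`, which adds `j` to the block `c`. Each set partition
of `insert j a` arises in exactly one of these ways from a set partition of `a`. The cumulant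
formula is the case `g = log` at `h 0 = 1`, where `log^(k) 1 = (-1) ^ (k - 1) * (k - 1)!`.
-/

open scoped ENNReal ContDiff

section SetPartitions

variable {α : Type*} [DecidableEq α] {a : Finset α} {j : α}

lemma subset_of_mem_insert_empty_parts (p : Finpartition a) {c : Finset α}
    (hc : c ∈ insert ∅ p.parts) : c ⊆ a := by
  rcases mem_insert.1 hc with rfl | hc
  exacts [empty_subset a, p.subset hc]

lemma sup_parts_erase (p : Finpartition a) {c : Finset α} (hc : c ∈ insert ∅ p.parts) :
    (p.parts.erase c).sup id = a \ c := by
  ext x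
  simp only [mem_sup, mem_erase, id_eq, mem_sdiff]
  constructor
  · rintro ⟨d, ⟨hdc, hd⟩, hxd⟩
    have hcd : x ∈ c → c ∈ p.parts → d = c := fun hxc hc ↦ p.eq_of_mem_parts hd hc hxd hxc
    exact ⟨p.subset hd hxd, by grind⟩
  · rintro ⟨hxa, hxc⟩
    obtain ⟨d, hd, hxd⟩ := p.exists_mem hxa
    exact ⟨d, ⟨ne_of_mem_of_not_mem' hxd hxc, hd⟩, hxd⟩

/-- The partition of `insert j a` obtained from the partition `p` of `a` by adding the new element
`j` to the block `c`. The choice `c = ∅` stands for opening the new block `{j}`. -/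
def insertIntoBlock (p : Finpartition a) (hj : j ∉ a) {c : Finset α} (hc : c ∈ insert ∅ p.parts) :
    Finpartition (insert j a) :=
  (p.ofSubset (erase_subset c p.parts) (sup_parts_erase p hc)).extend
    (insert_ne_empty j c)
    (disjoint_insert_right.2 ⟨fun h ↦ hj (mem_sdiff.1 h).1, sdiff_disjoint⟩)
    (by rw [sup_eq_union, union_insert,
      sdiff_union_of_subset (subset_of_mem_insert_empty_parts p hc)])

lemma parts_insertIntoBlock (p : Finpartition a) (hj : j ∉ a) {c : Finset α}
    (hc : c ∈ insert ∅ p.parts) :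
    (insertIntoBlock p hj hc).parts = insert (insert j c) (p.parts.erase c) :=
  rfl

lemma part_insertIntoBlock (p : Finpartition a) (hj : j ∉ a) {c : Finset α}
    (hc : c ∈ insert ∅ p.parts) : (insertIntoBlock p hj hc).part j = insert j c :=
  (insertIntoBlock p hj hc).part_eq_of_mem (mem_insert_self _ _) (mem_insert_self j c)

lemma restrict_insertIntoBlock (p : Finpartition a) (hj : j ∉ a) {c : Finset α}
    (hc : c ∈ insert ∅ p.parts) :
    (insertIntoBlock p hj hc).restrict (subset_insert j a) = p := by
  have hinter : ∀ d ∈ p.parts, d ∩ a = d := fun d hd ↦ inter_eq_left.2 (p.le hd)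
  have hempty := p.empty_notMem_parts
  ext d : 2
  simp only [Finpartition.restrict, parts_insertIntoBlock, inf_eq_inter, bot_eq_empty]
  grind

lemma parts_restrict_of_insert (hj : j ∉ a) (q : Finpartition (insert j a)) :
    (q.restrict (subset_insert j a)).parts =
      (insert ((q.part j).erase j) (q.parts.erase (q.part j))).erase ∅ := by
  have hpart : q.part j ∈ q.parts := q.part_mem.2 (mem_insert_self j a)
  have hinter : q.part j ∩ a = (q.part j).erase j := by
    grind [q.part_subset j]
  have hinter_other : ∀ d ∈ q.parts.erase (q.part j), d ∩ a = d := by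
    intro d hd
    obtain ⟨hne, hd⟩ := mem_erase.1 hd
    have hjd : j ∉ d := fun h ↦ hne (q.part_eq_of_mem hd h).symm
    exact inter_eq_left.2 ((subset_insert_iff_of_notMem hjd).1 (q.subset hd))
  change (q.parts.image (· ∩ a)).erase ∅ = _
  rw [← insert_erase hpart, image_insert, hinter, image_congr hinter_other, image_id',
    insert_erase hpart]

lemma erase_part_mem_insert_parts_restrict (hj : j ∉ a) (q : Finpartition (insert j a)) :
    (q.part j).erase j ∈ insert ∅ (q.restrict (subset_insert j a)).parts := by
  rw [parts_restrict_of_insert hj]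
  grind

lemma erase_part_notMem_parts_erase (q : Finpartition a) :
    (q.part j).erase j ∉ q.parts.erase (q.part j) := by
  intro h
  obtain ⟨hne, hmem⟩ := mem_erase.1 h
  obtain ⟨x, hx⟩ := q.nonempty_of_mem_parts hmem
  have hpart : q.part j ∈ q.parts := q.part_mem.2 (q.part_nonempty.1 ⟨x, mem_of_mem_erase hx⟩)
  exact hne (q.eq_of_mem_parts hmem hpart hx (mem_of_mem_erase hx))

lemma insertIntoBlock_restrict (hj : j ∉ a) (q : Finpartition (insert j a)) :
    insertIntoBlock (q.restrict (subset_insert j a)) hj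
      (erase_part_mem_insert_parts_restrict hj q) = q := by
  have hpart : q.part j ∈ q.parts := q.part_mem.2 (mem_insert_self j a)
  have hjpart : j ∈ q.part j := q.mem_part_self.2 (mem_insert_self j a)
  have hempty : ∅ ∉ q.parts.erase (q.part j) := fun h ↦ q.empty_notMem_parts (mem_of_mem_erase h)
  apply Finpartition.ext
  rw [parts_insertIntoBlock, parts_restrict_of_insert hj, erase_right_comm,
    erase_insert (erase_part_notMem_parts_erase q), erase_eq_of_notMem hempty,
    insert_erase hjpart, insert_erase hpart]

lemma sum_finpartition_insert {M : Type*} [AddCommMonoid M] (hj : j ∉ a)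
    (f : Finset (Finset α) → M) :
    ∑ q : Finpartition (insert j a), f q.parts =
      ∑ p : Finpartition a, (f (insert {j} p.parts) +
        ∑ c ∈ p.parts, f (insert (insert j c) (p.parts.erase c))) := by
  have hsplit (p : Finpartition a) : f (insert {j} p.parts) +
      ∑ c ∈ p.parts, f (insert (insert j c) (p.parts.erase c)) =
      ∑ c ∈ insert ∅ p.parts, f (insert (insert j c) (p.parts.erase c)) := by
    rw [sum_insert p.empty_notMem_parts, erase_eq_of_notMem p.empty_notMem_parts, insert_empty_eq]
  simp_rw [hsplit]
  rw [sum_sigma']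
  refine sum_bij' (fun q _ ↦ ⟨q.restrict (subset_insert j a), (q.part j).erase j⟩)
    (fun x hx ↦ insertIntoBlock x.1 hj (mem_sigma.1 hx).2) ?_ ?_ ?_ ?_ ?_
  · exact fun q _ ↦ mem_sigma.2 ⟨mem_univ _, erase_part_mem_insert_parts_restrict hj q⟩
  · exact fun _ _ ↦ mem_univ _
  · exact fun q _ ↦ insertIntoBlock_restrict hj q
  · rintro ⟨p, c⟩ hx
    have hc := (mem_sigma.1 hx).2
    have hjc : j ∉ c := fun h ↦ hj (subset_of_mem_insert_empty_parts p hc h)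
    simp [restrict_insertIntoBlock, part_insertIntoBlock, hjc]
  · exact fun q _ ↦ congrArg f (congrArg Finpartition.parts (insertIntoBlock_restrict hj q)).symm

end SetPartitions

section LaplaceIntegral

universe u

-- `E` and `F` share a universe so that inductions on `k` can replace `F` by `E →L[ℝ] F`.
variable {S : Type*} [MeasurableSpace S] {μ : Measure S}
  {E F : Type u} [NormedAddCommGroup E] [NormedSpace ℝ E] [NormedAddCommGroup F] [NormedSpace ℝ F]
  {Y : S → E →L[ℝ] ℝ} {φ : S → F}

/-- The Laplace transform `γ ↦ ∫ exp (Y γ) φ dμ` of the vector density `φ` with respect to the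
random linear form `Y`. Allowing vector-valued `φ` makes the class of these functions stable under
Fréchet differentiation. -/
noncomputable def laplaceIntegral (μ : Measure S) (Y : S → E →L[ℝ] ℝ) (φ : S → F) (γ : E) : F :=
  ∫ s, Real.exp (Y s γ) • φ s ∂μ

lemma ae_exp_apply_le (hY : MemLp Y ∞ μ) :
    ∀ᵐ s ∂μ, ∀ γ, Real.exp (Y s γ) ≤ Real.exp (lpNorm Y ∞ μ * ‖γ‖) := by
  filter_upwards [ae_le_lpNorm_exponent_top hY] with s hs γ
  exact Real.exp_le_exp.2 <| (Real.le_norm_self _).trans <| (Y s).le_of_opNorm_le hs γ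

lemma integrable_exp_apply_smul (hY : MemLp Y ∞ μ) (hφ : Integrable φ μ) (γ : E) :
    Integrable (fun s ↦ Real.exp (Y s γ) • φ s) μ := by
  refine hφ.bdd_smul (Real.exp (lpNorm Y ∞ μ * ‖γ‖))
    (Real.continuous_exp.comp_aestronglyMeasurable
      (hY.aestronglyMeasurable.apply_continuousLinearMap γ)) ?_
  filter_upwards [ae_exp_apply_le hY] with s hs
  rw [Real.norm_of_nonneg (Real.exp_pos _).le]
  exact hs γ

lemma integrable_smulRight (hY : MemLp Y ∞ μ) (hφ : Integrable φ μ) :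
    Integrable (fun s ↦ (Y s).smulRight (φ s)) μ :=
  memLp_one_iff_integrable.1 <|
    (ContinuousLinearMap.smulRightL ℝ E F).memLp_of_bilin 1 hY (memLp_one_iff_integrable.2 hφ)

lemma hasFDerivAt_laplaceIntegral (hY : MemLp Y ∞ μ) (hφ : Integrable φ μ) (γ : E) :
    HasFDerivAt (laplaceIntegral μ Y φ)
      (laplaceIntegral μ Y (fun s ↦ (Y s).smulRight (φ s)) γ) γ := by
  have hφ' := integrable_smulRight hY hφ
  refine hasFDerivAt_integral_of_dominated_of_fderiv_le
    (F' := fun x s ↦ Real.exp (Y s x) • (Y s).smulRight (φ s))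
    (bound := fun s ↦ Real.exp (lpNorm Y ∞ μ * (‖γ‖ + 1)) * ‖(Y s).smulRight (φ s)‖)
    (Metric.ball_mem_nhds γ one_pos)
    (.of_forall fun x ↦ (integrable_exp_apply_smul hY hφ x).aestronglyMeasurable)
    (integrable_exp_apply_smul hY hφ γ) (integrable_exp_apply_smul hY hφ' γ).aestronglyMeasurable
    ?_ (hφ'.norm.const_mul _) ?_
  · filter_upwards [ae_exp_apply_le hY] with s hs x hx
    rw [norm_smul, Real.norm_of_nonneg (Real.exp_pos _).le]
    have hxγ : ‖x‖ ≤ ‖γ‖ + 1 := by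
      linarith [norm_le_norm_add_norm_sub' x γ, mem_ball_iff_norm.1 hx]
    grw [hs x, hxγ]
    exact lpNorm_nonneg
  · refine .of_forall fun s x _ ↦ ?_
    refine ((Y s).hasFDerivAt.exp.smul_const (φ s)).congr_fderiv ?_
    ext v
    simp [mul_smul]

lemma fderiv_laplaceIntegral (hY : MemLp Y ∞ μ) (hφ : Integrable φ μ) :
    fderiv ℝ (laplaceIntegral μ Y φ) = laplaceIntegral μ Y (fun s ↦ (Y s).smulRight (φ s)) :=
  funext fun γ ↦ (hasFDerivAt_laplaceIntegral hY hφ γ).fderiv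

lemma contDiff_laplaceIntegral (hY : MemLp Y ∞ μ) (hφ : Integrable φ μ) :
    ContDiff ℝ ∞ (laplaceIntegral μ Y φ) := by
  refine contDiff_infty.2 fun k ↦ ?_
  induction k generalizing F with
  | zero =>
    exact contDiff_zero.2 <| continuous_iff_continuousAt.2 fun γ ↦
      (hasFDerivAt_laplaceIntegral hY hφ γ).continuousAt
  | succ k ih =>
    rw [Nat.cast_succ]
    refine contDiff_succ_iff_fderiv.2 ⟨fun γ ↦
      (hasFDerivAt_laplaceIntegral hY hφ γ).differentiableAt, ?_, ?_⟩
    · simp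
    rw [fderiv_laplaceIntegral hY hφ]
    exact ih (integrable_smulRight hY hφ)

lemma integrable_prod_apply_smul (hY : MemLp Y ∞ μ) (hφ : Integrable φ μ) {k : ℕ}
    (v : Fin k → E) : Integrable (fun s ↦ (∏ i, Y s (v i)) • φ s) μ := by
  induction k generalizing φ with
  | zero => simpa using hφ
  | succ k ih =>
    have hlast : Integrable (fun s ↦ Y s (v (Fin.last k)) • φ s) μ :=
      (integrable_smulRight hY hφ).apply_continuousLinearMap (v (Fin.last k))
    simpa only [Fin.prod_univ_castSucc, mul_smul] using ih hlast fun i ↦ v i.castSucc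

lemma iteratedFDeriv_laplaceIntegral_apply (hY : MemLp Y ∞ μ) (hφ : Integrable φ μ) (γ : E)
    {k : ℕ} (v : Fin k → E) :
    iteratedFDeriv ℝ k (laplaceIntegral μ Y φ) γ v =
      laplaceIntegral μ Y (fun s ↦ (∏ i, Y s (v i)) • φ s) γ := by
  induction k generalizing F with
  | zero => simp
  | succ k ih =>
    have hφ' := integrable_smulRight hY hφ
    rw [iteratedFDeriv_succ_apply_right, fderiv_laplaceIntegral hY hφ, ih hφ', laplaceIntegral,
      ContinuousLinearMap.integral_apply <|
        integrable_exp_apply_smul hY (integrable_prod_apply_smul hY hφ' _) γ]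
    simp [laplaceIntegral, Fin.prod_univ_castSucc, Fin.init, mul_smul]

end LaplaceIntegral

section MixedPartial

variable {n : ℕ} {F : Type*} [NormedAddCommGroup F] [NormedSpace ℝ F]
  {g : ℝ → F} {h : (Fin n → ℝ) → ℝ} {a : Finset (Fin n)} {j : Fin n} {x : Fin n → ℝ}

lemma mixedPartial_eq_iteratedFDeriv_s18 (H : (Fin n → ℝ) → F) {k : ℕ} {e : Fin k → Fin n}
    (hcard : #a = k) (he : ∀ i, e i ∈ a) (hmono : StrictMono e) (x : Fin n → ℝ) :
    mixedPartial H a x = iteratedFDeriv ℝ k H x fun i ↦ Pi.single (e i) 1 := by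
  subst hcard
  rw [orderEmbOfFin_unique rfl he hmono, mixedPartial]

lemma mixedPartial_empty_s18 (H : (Fin n → ℝ) → F) : mixedPartial H ∅ = H :=
  funext fun _ ↦ iteratedFDeriv_zero_apply _

lemma hasLineDerivAt_mixedPartial {H : (Fin n → ℝ) → F} (hH : ContDiffAt ℝ ∞ H x)
    (hj : ∀ i ∈ a, j < i) :
    HasLineDerivAt ℝ (mixedPartial H a) (mixedPartial H (insert j a) x) x (Pi.single j 1) := by
  have hinsert : mixedPartial H (insert j a) x = iteratedFDeriv ℝ (#a + 1) H x fun i ↦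
      Pi.single ((Fin.cons j (a.orderEmbOfFin rfl) : Fin (#a + 1) → Fin n) i) 1 := by
    refine mixedPartial_eq_iteratedFDeriv_s18 H (card_insert_of_notMem fun hja ↦ (hj j hja).false)
      (fun i ↦ ?_) (Fin.strictMono_cons.2 ⟨fun i ↦ hj _ (orderEmbOfFin_mem a rfl i),
        (a.orderEmbOfFin rfl).strictMono⟩) x
    cases i using Fin.cases <;> simp
  have hdiff : DifferentiableAt ℝ (iteratedFDeriv ℝ #a H) x :=
    hH.differentiableAt_iteratedFDeriv (mod_cast ENat.natCast_lt_top #a)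
  rw [hinsert, iteratedFDeriv_succ_apply_left]
  exact ((ContinuousMultilinearMap.apply ℝ _ F _).hasFDerivAt.comp x
    hdiff.hasFDerivAt).hasLineDerivAt (Pi.single j 1)

lemma hasLineDerivAt_iteratedDeriv_comp (hg : ContDiffAt ℝ ∞ g (h x)) (hh : ContDiffAt ℝ ∞ h x)
    (k : ℕ) (j : Fin n) :
    HasLineDerivAt ℝ (fun y ↦ iteratedDeriv k g (h y))
      (mixedPartial h {j} x • iteratedDeriv (k + 1) g (h x)) x (Pi.single j 1) := by
  have hgk : HasDerivAt (iteratedDeriv k g) (iteratedDeriv (k + 1) g (h x)) (h x) := by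
    rw [iteratedDeriv_succ, hasDerivAt_deriv_iff, iteratedDeriv_eq_equiv_comp]
    exact (LinearIsometryEquiv.differentiable _ _).comp (h x) <|
      hg.differentiableAt_iteratedFDeriv (mod_cast ENat.natCast_lt_top k)
  have hhj : HasLineDerivAt ℝ h (mixedPartial h {j} x) x (Pi.single j 1) := by
    simpa only [mixedPartial_empty_s18, insert_empty_eq] using
      hasLineDerivAt_mixedPartial (a := ∅) hh (by simp)
  rw [HasLineDerivAt] at hhj ⊢
  exact HasDerivAt.scomp_of_eq 0 hgk hhj (by simp)

/-- The summand of Faà di Bruno's formula for the mixed partial derivatives of `g ∘ h` that belongs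
to the set partition with blocks `P`. -/
noncomputable def faaDiBrunoTerm (g : ℝ → F) (h : (Fin n → ℝ) → ℝ) (P : Finset (Finset (Fin n)))
    (x : Fin n → ℝ) : F :=
  (∏ c ∈ P, mixedPartial h c x) • iteratedDeriv #P g (h x)

lemma faaDiBrunoTerm_insert {P : Finset (Finset (Fin n))} {c : Finset (Fin n)} (hc : c ∉ P) :
    faaDiBrunoTerm g h (insert c P) x =
      ((∏ d ∈ P, mixedPartial h d x) * mixedPartial h c x) •
        iteratedDeriv (#P + 1) g (h x) := by
  rw [faaDiBrunoTerm, prod_insert hc, card_insert_of_notMem hc, mul_comm]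

lemma hasLineDerivAt_faaDiBrunoTerm (hg : ContDiffAt ℝ ∞ g (h x)) (hh : ContDiffAt ℝ ∞ h x)
    {P : Finset (Finset (Fin n))} (hj : ∀ c ∈ P, ∀ i ∈ c, j < i) :
    HasLineDerivAt ℝ (faaDiBrunoTerm g h P)
      (faaDiBrunoTerm g h (insert {j} P) x +
        ∑ c ∈ P, faaDiBrunoTerm g h (insert (insert j c) (P.erase c)) x)
      x (Pi.single j 1) := by
  have hjP : ∀ c ∈ P, j ∉ c := fun c hc hjc ↦ (hj c hc j hjc).false
  have hnew : {j} ∉ P := fun hmem ↦ hjP _ hmem (mem_singleton_self j)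
  have henlarged : ∀ c ∈ P, insert j c ∉ P.erase c := fun c _ hmem ↦
    hjP _ (mem_of_mem_erase hmem) (mem_insert_self j c)
  have houter := hasLineDerivAt_iteratedDeriv_comp hg hh #P j
  have hprod : HasDerivAt
      (fun t : ℝ ↦ ∏ c ∈ P, mixedPartial h c (x + t • Pi.single j 1))
      (∑ c ∈ P, (∏ d ∈ P.erase c, mixedPartial h d x) * mixedPartial h (insert j c) x) 0 := by
    simpa using HasDerivAt.fun_finsetProd fun c hc ↦ hasLineDerivAt_mixedPartial hh (hj c hc)
  rw [HasLineDerivAt] at houter ⊢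
  refine (hprod.fun_smul houter).congr_deriv ?_
  rw [zero_smul, add_zero, faaDiBrunoTerm_insert hnew, mul_smul, sum_smul]
  congr 1
  refine sum_congr rfl fun c hc ↦ ?_
  rw [faaDiBrunoTerm_insert (henlarged c hc), card_erase_add_one hc]

theorem mixedPartial_comp (hg : ∀ x, ContDiffAt ℝ ∞ g (h x)) (hh : ContDiff ℝ ∞ h)
    (a : Finset (Fin n)) :
    mixedPartial (fun y ↦ g (h y)) a = fun x ↦
      ∑ p : Finpartition a, faaDiBrunoTerm g h p.parts x := by
  induction a using Finset.induction_on_min with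
  | empty =>
    funext x
    rw [mixedPartial_empty_s18, ← bot_eq_empty, Fintype.sum_unique, Finpartition.default_eq_empty]
    simp [faaDiBrunoTerm]
  | insert j a hj ih =>
    funext x
    have hgh : ContDiff ℝ ∞ fun y ↦ g (h y) :=
      contDiff_iff_contDiffAt.2 fun y ↦ (hg y).comp y hh.contDiffAt
    have hleft := hasLineDerivAt_mixedPartial hgh.contDiffAt (x := x) hj
    have hterm (p : Finpartition a) := hasLineDerivAt_faaDiBrunoTerm (hg x) hh.contDiffAt
      fun c hc i hi ↦ hj i (p.le hc hi)
    rw [ih] at hleft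
    rw [sum_finpartition_insert (fun hja ↦ (hj j hja).false) fun P ↦ faaDiBrunoTerm g h P x]
    exact hleft.unique <| HasDerivAt.fun_sum fun p _ ↦ hterm p

lemma iteratedDeriv_succ_real_log (k : ℕ) (y : ℝ) :
    iteratedDeriv (k + 1) Real.log y = (-1) ^ k * k.factorial / y ^ (k + 1) := by
  rw [iteratedDeriv_succ', Real.deriv_log', iteratedDeriv_eq_iterate, iter_deriv_inv,
    show (-1 - k : ℤ) = -((k + 1 : ℕ) : ℤ) by push_cast; ring, zpow_neg, zpow_natCast,
    div_eq_mul_inv]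

theorem mixedPartial_log (hh : ContDiff ℝ ∞ h) (h0 : ∀ x, h x ≠ 0) (ha : a.Nonempty)
    (x : Fin n → ℝ) :
    mixedPartial (fun y ↦ Real.log (h y)) a x =
      ∑ p : Finpartition a, (#p.parts - 1).factorial * (-1) ^ (#p.parts - 1) *
        (∏ c ∈ p.parts, mixedPartial h c x) / h x ^ #p.parts := by
  rw [mixedPartial_comp (fun y ↦ Real.contDiffAt_log.2 (h0 y)) hh]
  refine sum_congr rfl fun p _ ↦ ?_
  obtain ⟨k, hk⟩ : ∃ k, #p.parts = k + 1 :=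
    Nat.exists_eq_succ_of_ne_zero (p.parts_nonempty ha.ne_empty).card_ne_zero
  rw [faaDiBrunoTerm, hk, iteratedDeriv_succ_real_log, Nat.add_sub_cancel, smul_eq_mul]
  ring

end MixedPartial

section JointMGF

variable {S : Type*} {n : ℕ} {X : Fin n → S → ℝ}

/-- The random linear form `γ ↦ ∑ j, γ j * X j s`, through which the joint moment generating
function is an instance of `laplaceIntegral`. -/
def pairingForm (X : Fin n → S → ℝ) (s : S) : (Fin n → ℝ) →L[ℝ] ℝ :=
  ∑ j, X j s • ContinuousLinearMap.proj j

lemma pairingForm_apply (s : S) (γ : Fin n → ℝ) : pairingForm X s γ = ∑ j, γ j * X j s := by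
  simp [pairingForm, mul_comm]

lemma pairingForm_single (s : S) (j : Fin n) : pairingForm X s (Pi.single j 1) = X j s := by
  simp [pairingForm_apply, Pi.single_apply]

variable [MeasurableSpace S] {μ : Measure S}

lemma memLp_pairingForm {p : ℝ≥0∞} (hX : ∀ j, MemLp (X j) p μ) : MemLp (pairingForm X) p μ :=
  memLp_finsetSum (ε' := (Fin n → ℝ) →L[ℝ] ℝ) univ fun j _ ↦
    (ContinuousLinearMap.toSpanSingleton ℝ (ContinuousLinearMap.proj j)).comp_memLp' (hX j)

/-- The joint moment generating function `γ ↦ E[exp (∑ j, γ j * X j)]` of the random variables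
`X j`. -/
noncomputable def jointMGF (X : Fin n → S → ℝ) (μ : Measure S) (γ : Fin n → ℝ) : ℝ :=
  ∫ s, Real.exp (∑ j, γ j * X j s) ∂μ

lemma jointMGF_eq_laplaceIntegral :
    jointMGF X μ = laplaceIntegral μ (pairingForm X) fun _ ↦ (1 : ℝ) := by
  funext γ
  simp [jointMGF, laplaceIntegral, pairingForm_apply]

lemma jointMGF_zero [IsProbabilityMeasure μ] : jointMGF X μ 0 = 1 := by
  simp [jointMGF]

variable [IsFiniteMeasure μ]

lemma contDiff_jointMGF (hX : ∀ j, MemLp (X j) ∞ μ) : ContDiff ℝ ∞ (jointMGF X μ) := by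
  rw [jointMGF_eq_laplaceIntegral]
  exact contDiff_laplaceIntegral (memLp_pairingForm hX) (integrable_const 1)

lemma jointMGF_pos [NeZero μ] (hX : ∀ j, MemLp (X j) ∞ μ) (γ : Fin n → ℝ) :
    0 < jointMGF X μ γ := by
  refine integral_exp_pos ?_
  simpa only [pairingForm_apply, smul_eq_mul, mul_one] using
    integrable_exp_apply_smul (memLp_pairingForm hX) (integrable_const (1 : ℝ)) γ

lemma mixedPartial_jointMGF (hX : ∀ j, MemLp (X j) ∞ μ) (a : Finset (Fin n)) (γ : Fin n → ℝ) :
    mixedPartial (jointMGF X μ) a γ =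
      ∫ s, Real.exp (∑ j, γ j * X j s) * ∏ j ∈ a, X j s ∂μ := by
  have hprod (s : S) : ∏ i, X (a.orderEmbOfFin rfl i) s = ∏ j ∈ a, X j s := by
    conv_rhs => rw [← map_orderEmbOfFin_univ a rfl, prod_map]
    rfl
  rw [mixedPartial, jointMGF_eq_laplaceIntegral,
    iteratedFDeriv_laplaceIntegral_apply (memLp_pairingForm hX) (integrable_const 1)]
  simp only [laplaceIntegral, pairingForm_single, hprod, smul_eq_mul, mul_one]
  simp only [pairingForm_apply]

end JointMGF

/-- For bounded measurable random variables `X_1, …, X_n` on a probability space,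
the moment generating function `h(γ) = E[exp(∑_j γ_j X_j)]` is smooth and
positive, and for every nonempty `a` the mixed partial of `log ∘ h` at `γ = 0`
along the coordinates in `a` equals the cumulant
`log* f(a) = ∑_p (|p|−1)!(−1)^{|p|−1} ∏_{c∈p} f(c)` of the moment M-map
`f(a) = E[∏_{j∈a} X_j]`. -/
theorem cumulant_eq_mixedPartial_log_mgf (S : Type*) [MeasurableSpace S]
    (μ : Measure S) [IsProbabilityMeasure μ]
    (n : ℕ) (X : Fin n → S → ℝ)
    (hmeas : ∀ j, Measurable (X j)) (hbdd : ∀ j, ∃ C : ℝ, ∀ s, |X j s| ≤ C)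
    (f : Finset (Fin n) → ℝ) (hf : ∀ a : Finset (Fin n), f a = ∫ s, (∏ j ∈ a, X j s) ∂μ)
    (h : (Fin n → ℝ) → ℝ)
    (hh : ∀ γ : Fin n → ℝ, h γ = ∫ s, Real.exp (∑ j, γ j * X j s) ∂μ) :
    ContDiff ℝ (⊤ : ℕ∞) h ∧ (∀ γ, 0 < h γ) ∧
    ∀ a : Finset (Fin n), a.Nonempty →
      mixedPartial (fun γ => Real.log (h γ)) a 0 =
        ∑ p : Finpartition a,
          (Nat.factorial (p.parts.card - 1) : ℝ) * (-1 : ℝ) ^ (p.parts.card - 1) *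
            ∏ c ∈ p.parts, f c := by
  have hX (j : Fin n) : MemLp (X j) ∞ μ := by
    obtain ⟨C, hC⟩ := hbdd j
    exact memLp_top_of_bound (hmeas j).aestronglyMeasurable C (.of_forall hC)
  obtain rfl : h = jointMGF X μ := funext hh
  have hsmooth := contDiff_jointMGF hX
  have hpos := jointMGF_pos hX
  have hmoment (c : Finset (Fin n)) : mixedPartial (jointMGF X μ) c 0 = f c := by
    simp [mixedPartial_jointMGF hX, hf]
  refine ⟨hsmooth, hpos, fun a ha ↦ ?_⟩
  rw [mixedPartial_log hsmooth (fun γ ↦ (hpos γ).ne') ha]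
  simp_rw [jointMGF_zero, hmoment, one_pow, div_one]
end
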